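/- arXiv:1902.10512 — 3 statements merged into one kernel-verified Lean document; each statement's English description precedes it below -/
import Mathlib

section
/- Let w be an integer with γ^w = 2 in F_q (w = ind_γ 2). Then J_{2l²}(1,1) = ζ_{l²}^{−w} · J_{2l²}(1, l²). -/
open Complex Finset

/-- The `i`-th power character: `χ^i(v) = χ(v)^i` for `v ≠ 0`, with the convention
`χ^i(0) = 0` (in particular `χ^0(0) = 0`). -/
noncomputable def charPow {F : Type*} [DecidableEq F] [Zero F] (χ : F → ℂ) (i : ℤ) (v : F) : ℂ :=
  if v = 0 then 0 else χ v ^ i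

/-- The Jacobi sum `J_e(i,j) = ∑_{v ∈ F_q} χ_e^i(v) χ_e^j(v+1)`. -/
noncomputable def jSum {F : Type*} [Field F] [Fintype F] [DecidableEq F]
    (χ : F → ℂ) (i j : ℤ) : ℂ :=
  ∑ v : F, charPow χ i v * charPow χ j (v + 1)

/-!
Completing the square, `4 x (1 - x) = 1 - (2 x - 1) ^ 2`, turns `χ 4 * J(χ, χ)` into
`∑ u, χ (1 - u ^ 2)`. Each `t` has `1 + η t` square roots, where `η` is the quadratic character,
so this sum equals `∑ t, χ (1 - t) + ∑ t, η t * χ (1 - t) = 0 + J(χ, η)`. For `χ` of order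
`2 l²` the character `η` is `χ ^ (l²)`, and `4 = γ ^ (2 w)` gives `χ 4 = ζ_{l²} ^ w`. The sums of
the statement, taken over `v` and `v + 1`, are `χ^i (-1)` times those over `x` and `1 - x`.
-/

theorem pow_eq_neg_one_of_isPrimitiveRoot_two_mul {R : Type*} [CommRing R] [NoZeroDivisors R]
    {ζ : R} {n : ℕ} (hn : 0 < n) (hζ : IsPrimitiveRoot ζ (2 * n)) : ζ ^ n = -1 :=
  (hζ.pow (by positivity) (mul_comm 2 n)).eq_neg_one_of_two_right

theorem forall_mem_zpowers_of_forall_exists_pow {M : Type*} [MonoidWithZero M] [Nontrivial M]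
    {g : Mˣ} (hg : ∀ x : M, x ≠ 0 → ∃ k : ℕ, (g : M) ^ k = x) (x : Mˣ) :
    x ∈ Subgroup.zpowers g := by
  obtain ⟨k, hk⟩ := hg x x.ne_zero
  exact ⟨k, Units.ext (by simpa using hk)⟩

theorem exists_mulChar_coe_eq {F R : Type*} [CommGroupWithZero F] [CommMonoidWithZero R]
    [IsCancelMulZero R] {χ : F → R} (hχ0 : χ 0 = 0) (hχmul : ∀ x y, χ (x * y) = χ x * χ y) {a : F}
    (ha : χ a ≠ 0) : ∃ ψ : MulChar F R, ⇑ψ = χ := by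
  have hχ1 : χ 1 = 1 := by
    have h : χ a * χ 1 = χ a := by rw [← hχmul, mul_one]
    exact (mul_eq_left₀ ha).mp h
  refine ⟨⟨⟨⟨χ, hχ1⟩, hχmul⟩, fun x hx => ?_⟩, rfl⟩
  rw [isUnit_iff_ne_zero, not_not] at hx
  exact hx ▸ hχ0

section CommGroupWithZero

variable {F : Type*} [CommGroupWithZero F]

theorem mulChar_zpow_apply_coe {K : Type*} [Field K] (χ : MulChar F K) (n : ℤ) (a : Fˣ) :
    (χ ^ n) a = χ a ^ n := by
  rw [MulChar.zpow_apply_coe, Units.val_zpow_eq_zpow_val]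
  exact map_zpow₀ χ.toMonoidWithZeroHom (a : F) n

theorem charPow_coe [DecidableEq F] (χ : MulChar F ℂ) (n : ℤ) : charPow χ n = ⇑(χ ^ n) := by
  funext x
  obtain rfl | hx := eq_or_ne x 0
  · rw [charPow, if_pos rfl, MulChar.map_zero]
  · rw [charPow, if_neg hx]
    exact (mulChar_zpow_apply_coe χ n (Units.mk0 x hx)).symm

end CommGroupWithZero

theorem apply_four_mul_jacobiSum_self_eq_sum {S R : Type*} [CommRing S] [Fintype S] [CommRing R]
    (h2 : IsUnit (2 : S)) (χ : MulChar S R) : χ 4 * jacobiSum χ χ = ∑ u, χ (1 - u ^ 2) := by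
  rw [jacobiSum, mul_sum]
  refine Fintype.sum_equiv (h2.unit.mulLeft.trans (Equiv.subRight 1)) _ _ fun x => ?_
  calc χ 4 * (χ x * χ (1 - x)) = χ (4 * (x * (1 - x))) := by rw [map_mul, map_mul]
    _ = χ (1 - (2 * x - 1) ^ 2) := by congr 1; ring

section FiniteField

variable {F : Type*} [Field F] [Fintype F] [DecidableEq F]

theorem jSum_coe (χ : MulChar F ℂ) (i j : ℤ) :
    jSum χ i j = (χ ^ i) (-1) * jacobiSum (χ ^ i) (χ ^ j) := by
  rw [jSum, jacobiSum, mul_sum]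
  refine Fintype.sum_equiv (Equiv.neg F) _ _ fun x => ?_
  rw [charPow_coe, charPow_coe, ← mul_assoc, ← map_mul, Equiv.neg_apply, neg_one_mul,
    neg_neg, sub_neg_eq_add, add_comm]

theorem quadraticChar_eq_neg_one_of_generator (hF : ringChar F ≠ 2) {γ : Fˣ}
    (hγ : ∀ x, x ∈ Subgroup.zpowers γ) : quadraticChar F γ = -1 := by
  refine (quadraticChar_dichotomy γ.ne_zero).resolve_left fun h => quadraticChar_ne_one hF ?_
  rw [MulChar.eq_iff hγ, h, MulChar.one_apply_coe]

section CommRing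

variable {R : Type*} [CommRing R]

theorem mulChar_eq_quadraticChar_of_generator (hF : ringChar F ≠ 2) {γ : Fˣ}
    (hγ : ∀ x, x ∈ Subgroup.zpowers γ) {χ : MulChar F R} (hχ : χ γ = -1) :
    χ = (quadraticChar F).ringHomComp (Int.castRingHom R) := by
  rw [MulChar.eq_iff hγ, hχ, MulChar.ringHomComp_apply,
    quadraticChar_eq_neg_one_of_generator hF hγ]
  simp

theorem sum_comp_sq_eq_sum_quadraticChar (hF : ringChar F ≠ 2) (f : F → R) :
    ∑ u, f (u ^ 2) = ∑ t, (quadraticChar F t + 1 : R) * f t := by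
  have card_sqrts (t : F) : (#{u : F | u ^ 2 = t} : R) = quadraticChar F t + 1 := by
    have h := quadraticChar_card_sqrts hF t
    rw [Set.toFinset_ofPred] at h
    exact_mod_cast congrArg (Int.cast : ℤ → R) h
  rw [← sum_fiberwise' univ (· ^ 2) f]
  simp only [sum_const, nsmul_eq_mul, card_sqrts]

theorem apply_four_mul_jacobiSum_self [IsDomain R] (hF : ringChar F ≠ 2) {χ : MulChar F R}
    (hχ : χ ≠ 1) :
    χ 4 * jacobiSum χ χ =
      jacobiSum χ ((quadraticChar F).ringHomComp (Int.castRingHom R)) := by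
  have sum_one_sub : ∑ t, χ (1 - t) = 0 :=
    ((Equiv.subLeft 1).sum_comp χ).trans (MulChar.sum_eq_zero_of_ne_one hχ)
  have h2 : IsUnit (2 : F) := .mk0 2 (Ring.two_ne_zero hF)
  calc χ 4 * jacobiSum χ χ = ∑ u, χ (1 - u ^ 2) := apply_four_mul_jacobiSum_self_eq_sum h2 χ
    _ = ∑ t, (quadraticChar F t + 1 : R) * χ (1 - t) :=
      sum_comp_sq_eq_sum_quadraticChar hF fun t => χ (1 - t)
    _ = ∑ t, (quadraticChar F t : R) * χ (1 - t) := by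
      simp only [add_mul, one_mul, sum_add_distrib, sum_one_sub, add_zero]
    _ = jacobiSum χ ((quadraticChar F).ringHomComp (Int.castRingHom R)) := jacobiSum_comm
      ((quadraticChar F).ringHomComp (Int.castRingHom R)) χ

end CommRing

theorem apply_four_mul_jSum_one_one (hF : ringChar F ≠ 2) {χ : MulChar F ℂ} {n : ℤ}
    (hn : χ ^ n = (quadraticChar F).ringHomComp (Int.castRingHom ℂ)) :
    χ 4 * jSum χ 1 1 = jSum χ 1 n := by
  have hχ : χ ≠ 1 := by
    rintro rfl
    rw [one_zpow] at hn
    exact (MulChar.ringHomComp_ne_one_iff Int.cast_injective).mpr (quadraticChar_ne_one hF) hn.symm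
  rw [jSum_coe, jSum_coe, zpow_one, hn, mul_left_comm, apply_four_mul_jacobiSum_self hF hχ]

end FiniteField

theorem jacobiSum_one_one_eq_zeta_pow_mul_general {F : Type*} [Field F] [Fintype F]
    [DecidableEq F] {γ : F} (hγ : ∀ x : F, x ≠ 0 → ∃ k : ℕ, γ ^ k = x) {χ : F → ℂ}
    (hχ0 : χ 0 = 0) (hχmul : ∀ x y : F, χ (x * y) = χ x * χ y) {n : ℤ} (hn : χ γ ^ n = -1)
    {w : ℤ} (hw : γ ^ w = 2) :
    jSum χ 1 1 = (χ γ ^ 2) ^ (-w) * jSum χ 1 n := by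
  have hχγ : χ γ ≠ 0 := by
    intro h
    rw [h, zero_zpow_eq] at hn
    split_ifs at hn <;> norm_num at hn
  obtain ⟨ψ, rfl⟩ := exists_mulChar_coe_eq hχ0 hχmul hχγ
  obtain ⟨g, rfl⟩ : IsUnit γ := MulChar.apply_ne_zero_iff.mp hχγ
  have hg := forall_mem_zpowers_of_forall_exists_pow hγ
  have hF : ringChar F ≠ 2 := fun h =>
    haveI := ringChar.of_eq h
    zpow_ne_zero w g.ne_zero (hw.trans CharTwo.two_eq_zero)
  have hψn : ψ ^ n = (quadraticChar F).ringHomComp (Int.castRingHom ℂ) :=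
    mulChar_eq_quadraticChar_of_generator hF hg ((mulChar_zpow_apply_coe ψ n g).trans hn)
  have hψ4 : ψ 4 = (ψ g ^ 2) ^ w := by
    rw [show (4 : F) = 2 ^ 2 by norm_num, ← hw, map_pow, ← Units.val_zpow_eq_zpow_val,
      ← MulChar.zpow_apply_coe, mulChar_zpow_apply_coe, sq, sq, mul_zpow]
  rw [← apply_four_mul_jSum_one_one hF hψn, hψ4, zpow_neg,
    inv_mul_cancel_left₀ (zpow_ne_zero w (pow_ne_zero 2 hχγ))]

theorem jacobiSum_one_one_eq_zeta_pow_mul {F : Type*} [Field F] [Fintype F] [DecidableEq F]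
    (l p r q : ℕ) (hl : l.Prime) (hl3 : 3 ≤ l) (hp : p.Prime) (hr : 0 < r)
    (hq : q = p ^ r) (hql : q % (2 * l ^ 2) = 1) (hcard : Fintype.card F = q)
    (γ : F) (hγ : ∀ x : F, x ≠ 0 → ∃ k : ℕ, γ ^ k = x)
    (ζ : ℂ) (hζ : ζ = Complex.exp (2 * Real.pi * Complex.I / ((2 * l ^ 2 : ℕ) : ℂ)))
    (ζl : ℂ) (hζl : ζl = ζ ^ 2)
    (χ : F → ℂ) (hχ0 : χ 0 = 0) (hχγ : χ γ = ζ)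
    (hχmul : ∀ x y : F, χ (x * y) = χ x * χ y)
    (w : ℤ) (hw : γ ^ w = 2) :
    jSum χ 1 1 = ζl ^ (-w) * jSum χ 1 ((l : ℤ) ^ 2) := by
  subst hζl hχγ
  have hn : χ γ ^ (l ^ 2) = -1 := pow_eq_neg_one_of_isPrimitiveRoot_two_mul
    (pow_pos hl.pos 2) (hζ ▸ isPrimitiveRoot_exp _ (by simp [hl.ne_zero]))
  exact jacobiSum_one_one_eq_zeta_pow_mul_general hγ hχ0 hχmul (mod_cast hn) hw
end

section
/- Let n be an odd integer with 1 ≤ n < 2l²−1 and gcd(n, 2l²) = 1, and let τ_n be the ℚ-automorphism of ℚ(ζ_{2l²}) determined by τ_n(ζ_{2l²}) = ζ_{2l²}^n. Then q · J_{2l²}(1,n) = J_{2l²}(1, l²) · τ_n(J_{2l²}(1, l²)) · conj(J_{2l²}(1+n, l²−1)), where conj denotes complex conjugation. -/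
open Complex Finset

/-!
For characters `α, β, ρ` of a finite field with `q` elements, rewriting all Jacobi sums through
Gauss sums and using `g(χ) g(χ⁻¹) = χ(-1) q` gives

  `J(α, ρ) J(β, ρ⁻¹) J((αβ)⁻¹, αρ) = α(-1) q J(α, β)`.

Take `ρ` quadratic and `β = τ ∘ α`. Since `τ` fixes the values of `ρ`, the second factor is
`τ (J(α, ρ))`. For `α = χ` of order `2N` and `ρ = χ ^ N`, the third factor is the complex conjugate
of `J(χ ^ (1 + n), χ ^ (N - 1))`.
-/

section MulChar

variable {F : Type*} [CommGroupWithZero F]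

lemma exists_mulChar_coe_eq_s12 {R : Type*} [CommMonoidWithZero R] [IsLeftCancelMulZero R]
    {χ : F → R} (h0 : χ 0 = 0) (hmul : ∀ x y, χ (x * y) = χ x * χ y) {γ : F} (hγ : χ γ ≠ 0) :
    ∃ X : MulChar F R, ⇑X = χ := by
  have hone : χ 1 = 1 := mul_left_cancel₀ hγ (by rw [← hmul, mul_one, mul_one])
  refine ⟨{ toFun := χ, map_one' := hone, map_mul' := hmul, map_nonunit' := fun a ha ↦ ?_ }, rfl⟩
  rwa [not_ne_iff.mp (isUnit_iff_ne_zero.not.mp ha)]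

lemma mulChar_zpow_apply {K : Type*} [Field K] (χ : MulChar F K) (i : ℤ) {v : F}
    (hv : v ≠ 0) : (χ ^ i) v = χ v ^ i := by
  lift v to Fˣ using hv.isUnit
  rw [MulChar.zpow_apply_coe, Units.val_zpow_eq_zpow_val]
  exact map_zpow₀ χ.toMonoidWithZeroHom (v : F) i

lemma mulChar_eq_of_apply_generator_eq {R : Type*} [CommMonoidWithZero R] {χ φ : MulChar F R}
    {γ : F} (hγ : ∀ x : F, x ≠ 0 → ∃ k : ℕ, γ ^ k = x) (h : χ γ = φ γ) : χ = φ := by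
  ext v
  obtain ⟨k, hk⟩ := hγ v v.ne_zero
  rw [← hk, map_pow, map_pow, h]

lemma isPrimitiveRoot_of_apply_generator {R : Type*} [CommMonoidWithZero R] {χ : MulChar F R}
    {γ : F} (hγ : ∀ x : F, x ≠ 0 → ∃ k : ℕ, γ ^ k = x) (hγ0 : γ ≠ 0) {m : ℕ}
    (h : IsPrimitiveRoot (χ γ) m) : IsPrimitiveRoot χ m := by
  have hpow (k : ℕ) : (χ ^ k) γ = χ γ ^ k := MulChar.pow_apply_coe χ k (Units.mk0 γ hγ0)
  have hone : (1 : MulChar F R) γ = 1 := MulChar.one_apply hγ0.isUnit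
  refine ⟨mulChar_eq_of_apply_generator_eq hγ (by rw [hpow, h.pow_eq_one, hone]), fun k hk ↦ ?_⟩
  exact h.dvd_of_pow_eq_one k (by rw [← hpow, hk, hone])

end MulChar

section NegOne

variable {M R : Type*} [CommRing M] [CommRing R]

lemma mulChar_neg_one_mul_self (χ : MulChar M R) : χ (-1) * χ (-1) = 1 := by
  rw [← map_mul, neg_one_mul, neg_neg, map_one]

lemma mulChar_inv_neg_one (χ : MulChar M R) : χ⁻¹ (-1) = χ (-1) := by
  rw [MulChar.inv_apply, ← Units.coe_neg_one, Ring.inverse_unit, inv_neg_one]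

end NegOne

section GaussSum

variable {F R : Type*} [Field F] [Fintype F] [CommRing R] [IsDomain R]
  {α β ρ χ φ : MulChar F R} {ψ : AddChar F R}

lemma gaussSum_mul_gaussSum_inv (hχ : χ ≠ 1) (hψ : ψ.IsPrimitive) :
    gaussSum χ ψ * gaussSum χ⁻¹ ψ = χ (-1) * Fintype.card F := by
  rw [← mul_gaussSum_inv_eq_gaussSum χ⁻¹ ψ, mulChar_inv_neg_one, mul_left_comm,
    gaussSum_mul_gaussSum_eq_card hχ hψ]

lemma gaussSum_mul_jacobiSum_inv_left (hF : (Fintype.card F : R) ≠ 0) (hψ : ψ.IsPrimitive)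
    (hχ : χ ≠ 1) (hχφ : χ ≠ φ) :
    gaussSum χ ψ * jacobiSum χ⁻¹ φ = φ (-1) * (gaussSum (χ * φ⁻¹) ψ * gaussSum φ ψ) := by
  have hquot : χ * φ⁻¹ ≠ 1 := mul_inv_eq_one.not.mpr hχφ
  have hinv : χ⁻¹ * φ = (χ * φ⁻¹)⁻¹ := by rw [mul_inv, inv_inv]
  have hinv_ne : χ⁻¹ * φ ≠ 1 := hinv ▸ inv_ne_one.mpr hquot
  have hgauss : gaussSum (χ * φ⁻¹) ψ * gaussSum (χ⁻¹ * φ) ψ =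
      χ (-1) * φ (-1) * Fintype.card F := by
    rw [hinv, gaussSum_mul_gaussSum_inv hquot hψ, MulChar.mul_apply, mulChar_inv_neg_one]
  apply mul_left_cancel₀ (gaussSum_ne_zero_of_nontrivial hF hinv_ne hψ)
  calc gaussSum (χ⁻¹ * φ) ψ * (gaussSum χ ψ * jacobiSum χ⁻¹ φ)
    _ = gaussSum χ ψ * gaussSum χ⁻¹ ψ * gaussSum φ ψ := by
      rw [mul_left_comm, jacobiSum_mul_nontrivial hinv_ne, mul_assoc]
    _ = χ (-1) * Fintype.card F * gaussSum φ ψ := by rw [gaussSum_mul_gaussSum_inv hχ hψ]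
    _ = φ (-1) * (χ (-1) * φ (-1) * Fintype.card F) * gaussSum φ ψ := by
      linear_combination
        -(χ (-1) * Fintype.card F * gaussSum φ ψ) * mulChar_neg_one_mul_self φ
    _ = gaussSum (χ⁻¹ * φ) ψ * (φ (-1) * (gaussSum (χ * φ⁻¹) ψ * gaussSum φ ψ)) := by
      rw [← hgauss]; ring

lemma jacobiSum_mul_jacobiSum_inv_mul_jacobiSum_of_isPrimitive
    (hF : (Fintype.card F : R) ≠ 0) (hψ : ψ.IsPrimitive)
    (hρ : ρ ≠ 1) (hαβ : α * β ≠ 1) (hαρ : α * ρ ≠ 1) (hβρ : β ≠ ρ) :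
    jacobiSum α ρ * jacobiSum β ρ⁻¹ * jacobiSum (α * β)⁻¹ (α * ρ) =
      α (-1) * Fintype.card F * jacobiSum α β := by
  have hquot : α * β * (α * ρ)⁻¹ = β * ρ⁻¹ := by rw [mul_inv, mul_mul_mul_comm]; simp
  have hthird : gaussSum (α * β) ψ * jacobiSum (α * β)⁻¹ (α * ρ) =
      α (-1) * ρ (-1) * (gaussSum (β * ρ⁻¹) ψ * gaussSum (α * ρ) ψ) := by
    rw [gaussSum_mul_jacobiSum_inv_left hF hψ hαβ (mul_right_injective α |>.ne hβρ), hquot,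
      MulChar.mul_apply]
  apply mul_left_cancel₀ (gaussSum_ne_zero_of_nontrivial hF hαβ hψ)
  calc gaussSum (α * β) ψ * (jacobiSum α ρ * jacobiSum β ρ⁻¹ * jacobiSum (α * β)⁻¹ (α * ρ))
    _ = α (-1) * ρ (-1) * (gaussSum (α * ρ) ψ * jacobiSum α ρ) *
        (gaussSum (β * ρ⁻¹) ψ * jacobiSum β ρ⁻¹) := by
      rw [mul_left_comm, hthird]; ring
    _ = α (-1) * ρ (-1) * (gaussSum α ψ * gaussSum β ψ) *
        (gaussSum ρ ψ * gaussSum ρ⁻¹ ψ) := by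
      rw [jacobiSum_mul_nontrivial hαρ,
        jacobiSum_mul_nontrivial (mul_inv_eq_one.not.mpr hβρ)]
      ring
    _ = ρ (-1) * ρ (-1) * (α (-1) * Fintype.card F * (gaussSum α ψ * gaussSum β ψ)) := by
      rw [gaussSum_mul_gaussSum_inv hρ hψ]; ring
    _ = gaussSum (α * β) ψ * (α (-1) * Fintype.card F * jacobiSum α β) := by
      rw [mulChar_neg_one_mul_self, ← jacobiSum_mul_nontrivial hαβ]; ring

end GaussSum

section JacobiSum

variable {F K : Type*} [Field F] [Fintype F] [Field K] {α β ρ : MulChar F K}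

lemma card_cast_ne_zero_of_ringChar_ne (h : ringChar K ≠ ringChar F) :
    (Fintype.card F : K) ≠ 0 := by
  obtain ⟨k, hp, hcard⟩ := FiniteField.card F (ringChar F)
  rw [hcard, Nat.cast_pow]
  exact pow_ne_zero _ fun hzero ↦ h (CharP.ringChar_of_prime_eq_zero hp hzero)

theorem jacobiSum_mul_jacobiSum_inv_mul_jacobiSum (h : ringChar K ≠ ringChar F)
    (hρ : ρ ≠ 1) (hαβ : α * β ≠ 1) (hαρ : α * ρ ≠ 1) (hβρ : β ≠ ρ) :
    jacobiSum α ρ * jacobiSum β ρ⁻¹ * jacobiSum (α * β)⁻¹ (α * ρ) =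
      α (-1) * Fintype.card F * jacobiSum α β := by
  let ψ := AddChar.FiniteField.primitiveChar F K h
  let f := algebraMap K (CyclotomicField ψ.n K)
  have hne {θ : MulChar F K} : θ ≠ 1 → θ.ringHomComp f ≠ 1 :=
    (MulChar.ringHomComp_ne_one_iff f.injective).mpr
  have hF : (Fintype.card F : CyclotomicField ψ.n K) ≠ 0 := by
    rw [← map_natCast f]
    exact (map_ne_zero f).mpr (card_cast_ne_zero_of_ringChar_ne h)
  apply f.injective
  simp only [map_mul, map_natCast, ← jacobiSum_ringHomComp, ← MulChar.ringHomComp_inv,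
    MulChar.ringHomComp_mul, ← MulChar.ringHomComp_apply]
  exact jacobiSum_mul_jacobiSum_inv_mul_jacobiSum_of_isPrimitive hF ψ.prim (hne hρ)
    (MulChar.ringHomComp_mul α β f ▸ hne hαβ) (MulChar.ringHomComp_mul α ρ f ▸ hne hαρ)
    (MulChar.injective_ringHomComp f.injective |>.ne hβρ)

lemma ringHomComp_eq_self_of_isQuadratic {M R : Type*} [CommMonoid M] [CommRing R]
    {ρ : MulChar M R} (hρ : ρ.IsQuadratic) (τ : R →+* R) : ρ.ringHomComp τ = ρ := by
  ext a
  rw [MulChar.ringHomComp_apply]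
  rcases hρ a with ha | ha | ha <;> simp [ha]

theorem jacobiSum_mul_map_jacobiSum_mul_jacobiSum (h : ringChar K ≠ ringChar F) (τ : K →+* K)
    (hρ : ρ.IsQuadratic) (hρ_ne : ρ ≠ 1) (hα : α * α.ringHomComp τ ≠ 1) :
    jacobiSum α ρ * τ (jacobiSum α ρ) * jacobiSum (α * α.ringHomComp τ)⁻¹ (α * ρ) =
      α (-1) * Fintype.card F * jacobiSum α (α.ringHomComp τ) := by
  have hτρ := ringHomComp_eq_self_of_isQuadratic hρ τ
  have hρ_sq : ρ * ρ = 1 := by rw [← sq, hρ.sq_eq_one]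
  have hα_ne : α ≠ ρ := by
    rintro rfl
    exact hα (by rw [hτρ, hρ_sq])
  have hτα_ne : α.ringHomComp τ ≠ ρ :=
    fun h ↦ hα_ne (MulChar.injective_ringHomComp τ.injective (h.trans hτρ.symm))
  have hαρ : α * ρ ≠ 1 := by rwa [← hρ_sq, Ne, mul_left_inj]
  rw [← jacobiSum_mul_jacobiSum_inv_mul_jacobiSum h hρ_ne hα hαρ hτα_ne, hρ.inv,
    ← jacobiSum_ringHomComp, hτρ]

lemma conj_jacobiSum {M : Type*} [CommRing M] [Fintype M] (χ φ : MulChar M ℂ) :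
    (starRingEnd ℂ) (jacobiSum χ φ) = jacobiSum χ⁻¹ φ⁻¹ := by
  rw [← jacobiSum_ringHomComp, ← MulChar.star_eq_inv, ← MulChar.star_eq_inv]
  rfl

end JacobiSum

section JSum

variable {F : Type*} [Field F] [DecidableEq F]

lemma charPow_mulChar (χ : MulChar F ℂ) (i : ℤ) (v : F) : charPow χ i v = (χ ^ i) v := by
  unfold charPow
  split_ifs with hv
  · rw [hv, MulChar.map_zero]
  · rw [mulChar_zpow_apply χ i hv]

-- The sign comes from substituting `-v` for `v`: `jacobiSum` has `1 - v` where `jSum` has `v + 1`.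
lemma jSum_mulChar [Fintype F] (χ : MulChar F ℂ) (i j : ℤ) :
    jSum χ i j = (χ ^ i) (-1) * jacobiSum (χ ^ i) (χ ^ j) := by
  rw [jSum, jacobiSum, ← Equiv.sum_comp (Equiv.neg F), Finset.mul_sum]
  refine Finset.sum_congr rfl fun v _ ↦ ?_
  rw [charPow_mulChar, charPow_mulChar, Equiv.neg_apply, ← mul_assoc, ← map_mul, neg_one_mul,
    neg_add_eq_sub]

theorem card_mul_jSum_one_eq [Fintype F] (χ : MulChar F ℂ) (τ : ℂ →+* ℂ) {N n : ℤ}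
    (hτ : χ.ringHomComp τ = χ ^ n) (hn : χ ^ (1 + n) ≠ 1)
    (hN : (χ ^ N).IsQuadratic) (hN_ne : χ ^ N ≠ 1) :
    (Fintype.card F : ℂ) * jSum χ 1 n =
      jSum χ 1 N * τ (jSum χ 1 N) * (starRingEnd ℂ) (jSum χ (1 + n) (N - 1)) := by
  have hchar : ringChar ℂ ≠ ringChar F := by
    rw [ringChar.eq_zero]
    exact (CharP.ringChar_ne_zero_of_finite F).symm
  have hsign : (χ ^ (1 + n)) (-1) = χ (-1) * τ (χ (-1)) := by
    rw [zpow_one_add, ← hτ, MulChar.mul_apply, MulChar.ringHomComp_apply]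
  have hsign_sq := hsign ▸ mulChar_neg_one_mul_self (χ ^ (1 + n))
  have hconj : (starRingEnd ℂ) (jSum χ (1 + n) (N - 1)) =
      χ (-1) * τ (χ (-1)) * jacobiSum (χ * χ.ringHomComp τ)⁻¹ (χ * χ ^ N) := by
    rw [jSum_mulChar, map_mul, conj_jacobiSum, starRingEnd_apply, MulChar.star_apply',
      mulChar_inv_neg_one, hsign, hτ, ← zpow_one_add, zpow_sub_one, mul_inv, inv_inv, hN.inv,
      mul_comm χ]
  have hmain := jacobiSum_mul_map_jacobiSum_mul_jacobiSum hchar τ hN hN_ne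
    (by rwa [hτ, ← zpow_one_add])
  have hone : jSum χ 1 N = χ (-1) * jacobiSum χ (χ ^ N) := by rw [jSum_mulChar, zpow_one]
  calc (Fintype.card F : ℂ) * jSum χ 1 n
    _ = χ (-1) * Fintype.card F * jacobiSum χ (χ.ringHomComp τ) := by
      rw [jSum_mulChar, zpow_one, hτ]; ring
    _ = jacobiSum χ (χ ^ N) * τ (jacobiSum χ (χ ^ N)) *
        jacobiSum (χ * χ.ringHomComp τ)⁻¹ (χ * χ ^ N) := hmain.symm
    _ = jSum χ 1 N * τ (jSum χ 1 N) * (starRingEnd ℂ) (jSum χ (1 + n) (N - 1)) := by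
      rw [← one_mul (_ * _ * _), ← hsign_sq, hconj, hone, map_mul]; ring

end JSum

theorem jacobiSum_coprime_formula_general {F : Type*} [Field F] [Fintype F] [DecidableEq F]
    {χ : F → ℂ} (hχ0 : χ 0 = 0) (hχmul : ∀ x y : F, χ (x * y) = χ x * χ y)
    {γ : F} (hγ : ∀ x : F, x ≠ 0 → ∃ k : ℕ, γ ^ k = x)
    {N : ℕ} (hN : N ≠ 0) (hχγ : IsPrimitiveRoot (χ γ) (2 * N))
    {n : ℤ} (hn : ¬ (2 * N : ℤ) ∣ 1 + n) (τ : ℂ →+* ℂ) (hτ : τ (χ γ) = χ γ ^ n) :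
    (Fintype.card F : ℂ) * jSum χ 1 n =
      jSum χ 1 N * τ (jSum χ 1 N) * (starRingEnd ℂ) (jSum χ (1 + n) (N - 1)) := by
  have hχγ0 : χ γ ≠ 0 := hχγ.ne_zero (by positivity)
  obtain ⟨X, rfl⟩ := exists_mulChar_coe_eq_s12 hχ0 hχmul hχγ0
  have hγ0 : γ ≠ 0 := by
    rintro rfl
    exact hχγ0 hχ0
  have hX := isPrimitiveRoot_of_apply_generator hγ hγ0 hχγ
  have hXN : IsPrimitiveRoot (X ^ (N : ℤ)) 2 := by
    rw [zpow_natCast]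
    exact hX.pow (by positivity) (mul_comm 2 N)
  apply card_mul_jSum_one_eq X τ
  · apply mulChar_eq_of_apply_generator_eq hγ
    rw [MulChar.ringHomComp_apply, hτ, mulChar_zpow_apply X n hγ0]
  · rw [Ne, hX.zpow_eq_one_iff_dvd]
    exact_mod_cast hn
  · exact MulChar.isQuadratic_iff_sq_eq_one.mpr hXN.pow_eq_one
  · exact hXN.ne_one one_lt_two

theorem jacobiSum_coprime_formula {F : Type*} [Field F] [Fintype F] [DecidableEq F]
    (l p r q : ℕ) (hl : l.Prime) (hl3 : 3 ≤ l) (hp : p.Prime) (hr : 0 < r)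
    (hq : q = p ^ r) (hql : q % (2 * l ^ 2) = 1) (hcard : Fintype.card F = q)
    (γ : F) (hγ : ∀ x : F, x ≠ 0 → ∃ k : ℕ, γ ^ k = x)
    (ζ : ℂ) (hζ : ζ = Complex.exp (2 * Real.pi * Complex.I / ((2 * l ^ 2 : ℕ) : ℂ)))
    (ζl : ℂ) (hζl : ζl = ζ ^ 2)
    (χ : F → ℂ) (hχ0 : χ 0 = 0) (hχγ : χ γ = ζ)
    (hχmul : ∀ x y : F, χ (x * y) = χ x * χ y)
    (n : ℤ) (hn1 : 1 ≤ n) (hn2 : n < 2 * (l : ℤ) ^ 2 - 1) (hnodd : Odd n)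
    (hncop : IsCoprime n (2 * (l : ℤ) ^ 2))
    (τ : ℂ →+* ℂ) (hτ : τ ζ = ζ ^ n) :
    (q : ℂ) * jSum χ 1 n =
      jSum χ 1 ((l : ℤ) ^ 2) * τ (jSum χ 1 ((l : ℤ) ^ 2)) *
        (starRingEnd ℂ) (jSum χ (1 + n) ((l : ℤ) ^ 2 - 1)) := by
  have hn : ¬ (2 * (l ^ 2 : ℕ) : ℤ) ∣ 1 + n :=
    fun h ↦ absurd (Int.le_of_dvd (by lia) h) (by push_cast; lia)
  have hprim : IsPrimitiveRoot (χ γ) (2 * l ^ 2) :=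
    hχγ ▸ hζ ▸ isPrimitiveRoot_exp _ (mul_ne_zero two_ne_zero (pow_ne_zero 2 hl.ne_zero))
  exact_mod_cast hcard ▸ jacobiSum_coprime_formula_general hχ0 hχmul hγ
    (pow_ne_zero 2 hl.ne_zero) hprim hn τ (hχγ.symm ▸ hτ)
end

section
/- Let n be an integer with 1 ≤ n ≤ l²−1 and gcd(l, n) = l (i.e. l divides n). Then J_{l²}(1,n) ≡ −1 (mod (1−ζ_{l²})^{l+1}), i.e. (J_{l²}(1,n) + 1)/(1−ζ_{l²})^{l+1} lies in the ring of integers of ℚ(ζ_{l²}). -/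
open Complex Finset

/-!
Since `∑ χ` and `∑ ψ` are multiples of `q - 1`, expanding `∑ (1 - χ x) * (1 - ψ (1 - x))` shows that
`J(χ, ψ) + 1` is this sum up to multiples of `q - 1`. If `μ` is a primitive `n`-th root of unity and
`d ∣ n`, then `1 - μ ^ d = ∏ (1 - μ ^ (1 + i * n / d))` is divisible by `(1 - μ) ^ d`. Hence if the
values of `χ` and `ψ` are powers of `μ ^ a` and `μ ^ b`, each summand is divisible by
`(1 - μ) ^ (a + b)`; and so is `q - 1`, being a multiple of `n`, as soon as `a + b < n`. Passing
from the argument `v + 1` to `1 - x` costs a factor `χ (-1)`, which is `1` when the order is odd.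
The theorem is the case `n = l ^ 2`, `a = 1`, `b = l`.
-/

section Divisibility

variable {F R : Type*} [Field F] [CommRing R]

lemma jacobiSum_add_one_eq_sum_one_sub_mul_one_sub [Fintype F] (χ ψ : MulChar F R) :
    jacobiSum χ ψ + 1 = ∑ x, (1 - χ x) * (1 - ψ (1 - x)) + ∑ x, χ x + ∑ x, ψ x
      - ((Fintype.card F : R) - 1) := by
  have hψ : ∑ x, ψ (1 - x) = ∑ x, ψ x := (Equiv.subLeft (1 : F)).sum_comp ψ
  have expand (x : F) : (1 - χ x) * (1 - ψ (1 - x)) =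
      1 - χ x - ψ (1 - x) + χ x * ψ (1 - x) := by ring
  simp only [expand, sum_add_distrib, sum_sub_distrib, hψ, jacobiSum, sum_const, card_univ,
    nsmul_eq_mul, mul_one]
  ring

variable [IsDomain R]

lemma one_sub_pow_dvd_one_sub_pow_of_isPrimitiveRoot {n d : ℕ} [NeZero n] {μ : R}
    (hμ : IsPrimitiveRoot μ n) (hd : d ∣ n) : (1 - μ) ^ d ∣ 1 - μ ^ d := by
  obtain ⟨m, rfl⟩ := hd
  have hd0 : NeZero d := ⟨left_ne_zero_of_mul (NeZero.ne (d * m))⟩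
  have hω : IsPrimitiveRoot (μ ^ m) d := hμ.pow (NeZero.pos _) (mul_comm d m)
  have factorization : 1 - μ ^ d = ∏ ω ∈ Polynomial.nthRootsFinset d (1 : R), (1 - ω * μ) := by
    simpa only [one_pow] using hω.pow_sub_pow_eq_prod_sub_mul 1 μ hd0.pos
  have hconst : (1 - μ) ^ d = ∏ _ω ∈ Polynomial.nthRootsFinset d (1 : R), (1 - μ) := by
    rw [prod_const, hω.card_nthRootsFinset]
  rw [factorization, hconst]
  refine prod_dvd_prod_of_dvd _ _ fun ω hω_mem => ?_
  obtain ⟨i, -, rfl⟩ :=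
    hω.eq_pow_of_pow_eq_one ((Polynomial.mem_nthRootsFinset hd0.pos 1).mp hω_mem)
  rw [← pow_mul, ← pow_succ]
  exact one_sub_dvd_one_sub_pow μ _

lemma one_sub_pow_dvd_natCast_order {n k : ℕ} {μ : R} (hμ : IsPrimitiveRoot μ n) (hk : k < n) :
    (1 - μ) ^ k ∣ (n : R) := by
  obtain ⟨z, -, hz⟩ := hμ.self_sub_one_pow_dvd_order hk
  have hneg : 1 - μ ∣ μ - 1 := dvd_sub_comm.mp dvd_rfl
  exact hz ▸ (pow_dvd_pow_of_dvd hneg k).mul_left z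

lemma one_sub_pow_dvd_one_sub_mulChar_apply [Finite F] {n d : ℕ} [NeZero n] {μ : R}
    (hμ : IsPrimitiveRoot μ n) (hd : d ∣ n) {χ : MulChar F R} (hχ : χ ^ (n / d) = 1) {x : F}
    (hx : x ≠ 0) : (1 - μ) ^ d ∣ 1 - χ x := by
  have : NeZero (n / d) := ⟨Nat.div_ne_zero_iff_of_dvd hd |>.mpr
    ⟨NeZero.ne n, ne_zero_of_dvd_ne_zero (NeZero.ne n) hd⟩⟩
  have hω : IsPrimitiveRoot (μ ^ d) (n / d) := hμ.pow (NeZero.pos n) (Nat.mul_div_cancel' hd).symm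
  obtain ⟨k, -, hk⟩ := χ.exists_apply_eq_pow hχ hω hx
  exact hk ▸ (one_sub_pow_dvd_one_sub_pow_of_isPrimitiveRoot hμ hd).trans
    (one_sub_dvd_one_sub_pow _ k)

variable [Fintype F]

lemma card_sub_one_dvd_sum_mulChar (χ : MulChar F R) :
    (Fintype.card F : R) - 1 ∣ ∑ x, χ x := by
  classical
  by_cases hχ : χ = 1
  · rw [hχ, MulChar.sum_one_eq_card_units, Fintype.card_eq_card_units_add_one (α := F),
      Nat.cast_add_one, add_sub_cancel_right]
  · exact MulChar.sum_eq_zero_of_ne_one hχ ▸ dvd_zero _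

theorem one_sub_pow_dvd_jacobiSum_add_one {n a b : ℕ} {μ : R} (hμ : IsPrimitiveRoot μ n)
    (ha : a ∣ n) (hb : b ∣ n) (hab : a + b < n) (hn : n ∣ Fintype.card F - 1)
    {χ ψ : MulChar F R} (hχ : χ ^ (n / a) = 1) (hψ : ψ ^ (n / b) = 1) :
    (1 - μ) ^ (a + b) ∣ jacobiSum χ ψ + 1 := by
  have : NeZero n := ⟨by lia⟩
  have hcard : (1 - μ) ^ (a + b) ∣ (Fintype.card F : R) - 1 := by
    rw [← Nat.cast_pred Fintype.card_pos]
    exact (one_sub_pow_dvd_natCast_order hμ hab).trans (Nat.cast_dvd_cast hn)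
  have hsummand (x : F) : (1 - μ) ^ (a + b) ∣ (1 - χ x) * (1 - ψ (1 - x)) := by
    rcases eq_or_ne x 0 with rfl | hx0
    · simp
    rcases eq_or_ne x 1 with rfl | hx1
    · simp
    · exact pow_add (1 - μ) a b ▸ mul_dvd_mul
        (one_sub_pow_dvd_one_sub_mulChar_apply hμ ha hχ hx0)
        (one_sub_pow_dvd_one_sub_mulChar_apply hμ hb hψ (sub_ne_zero.mpr hx1.symm))
  rw [jacobiSum_add_one_eq_sum_one_sub_mul_one_sub]
  exact (((dvd_sum fun x _ => hsummand x).add (hcard.trans (card_sub_one_dvd_sum_mulChar χ))).add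
    (hcard.trans (card_sub_one_dvd_sum_mulChar ψ))).sub hcard

end Divisibility

lemma exists_mulChar_integralClosure {F R : Type*} [Field F] [CommRing R] {n : ℕ} (hn : n ≠ 0)
    (f : F →*₀ R) (hf : ∀ x ≠ 0, f x ^ n = 1) :
    ∃ ψ : MulChar F (integralClosure ℤ R), ψ ^ n = 1 ∧ ⇑(ψ.ringHomComp (algebraMap _ R)) = f := by
  have hint (x : F) : IsIntegral ℤ (f x) := by
    rcases eq_or_ne x 0 with rfl | hx
    · exact map_zero f ▸ isIntegral_zero
    · exact .of_pow hn.pos (hf x hx ▸ isIntegral_one)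
  let ψ : MulChar F (integralClosure ℤ R) :=
    { toFun x := ⟨f x, hint x⟩
      map_one' := Subtype.ext (map_one f)
      map_mul' x y := Subtype.ext (map_mul f x y)
      map_nonunit' x hx := Subtype.ext (by simp_all) }
  refine ⟨ψ, MulChar.ext fun u => Subtype.ext ?_, rfl⟩
  rw [MulChar.pow_apply_coe, MulChar.one_apply_coe]
  exact hf u u.ne_zero

lemma zpow_pow_div_eq_one {G : Type*} [Group G] {g : G} {n a : ℕ} (hg : g ^ n = 1) (ha : a ∣ n)
    {i : ℤ} (hi : (a : ℤ) ∣ i) : (g ^ i) ^ (n / a) = 1 := by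
  obtain ⟨c, rfl⟩ := hi
  rw [zpow_mul, zpow_natCast, ← zpow_natCast, zpow_comm, zpow_natCast, ← pow_mul,
    Nat.mul_div_cancel' ha, hg, one_zpow]

section ShiftedJacobiSum

variable {F : Type*} [Field F] [DecidableEq F]

lemma jSum_ringHomComp [Fintype F] {R : Type*} [CommRing R] (f : R →+* ℂ) {n : ℕ} (hn : Odd n)
    {ψ : MulChar F R} (hψ : ψ ^ n = 1) (i j : ℤ) :
    jSum (ψ.ringHomComp f) i j = f (jacobiSum (ψ ^ i) (ψ ^ j)) := by
  have hneg : (ψ ^ i) (-1) = 1 :=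
    MulChar.val_neg_one_eq_one_of_odd_order hn
      (by rw [← zpow_natCast, zpow_comm, zpow_natCast, hψ, one_zpow])
  rw [jSum_mulChar, MulChar.ringHomComp_zpow, MulChar.ringHomComp_zpow, jacobiSum_ringHomComp,
    MulChar.ringHomComp_apply, hneg, map_one, one_mul]

theorem isIntegral_jSum_ringHomComp_add_one_div [Fintype F] {n a b : ℕ} (hn : Odd n) (ha : a ∣ n)
    (hb : b ∣ n) (hab : a + b < n) (hcard : n ∣ Fintype.card F - 1) {ζ : ℂ}
    (hζ : IsPrimitiveRoot ζ n) {ψ : MulChar F (integralClosure ℤ ℂ)} (hψ : ψ ^ n = 1) {i j : ℤ}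
    (hi : (a : ℤ) ∣ i) (hj : (b : ℤ) ∣ j) :
    IsIntegral ℤ ((jSum (ψ.ringHomComp (algebraMap _ ℂ)) i j + 1) / (1 - ζ) ^ (a + b)) := by
  let μ : integralClosure ℤ ℂ := ⟨ζ, hζ.isIntegral hn.pos⟩
  have hμ : IsPrimitiveRoot μ n :=
    .of_map_of_injective (f := algebraMap _ ℂ) hζ Subtype.val_injective
  obtain ⟨z, hz⟩ := one_sub_pow_dvd_jacobiSum_add_one hμ ha hb hab hcard
    (zpow_pow_div_eq_one hψ ha hi) (zpow_pow_div_eq_one hψ hb hj)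
  have hn1 : 1 < n := by have := Nat.pos_of_dvd_of_pos ha hn.pos; lia
  have hζ1 : 1 - ζ ≠ 0 := sub_ne_zero.mpr (hζ.ne_one hn1).symm
  have hquot : (jSum (ψ.ringHomComp (algebraMap _ ℂ)) i j + 1) / (1 - ζ) ^ (a + b) = z := by
    rw [jSum_ringHomComp _ hn hψ, div_eq_iff (pow_ne_zero _ hζ1), mul_comm]
    exact congrArg Subtype.val hz
  exact hquot ▸ z.2

theorem jacobiSum_lsq_div_general [Fintype F] {n a b : ℕ} (hn : Odd n) (ha : a ∣ n) (hb : b ∣ n)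
    (hab : a + b < n) {γ : F} (hγ : ∀ x : F, x ≠ 0 → ∃ k : ℕ, γ ^ k = x) {ζ : ℂ}
    (hζ : IsPrimitiveRoot ζ n) {χ : F → ℂ} (hχ0 : χ 0 = 0) (hχγ : χ γ = ζ)
    (hχmul : ∀ x y : F, χ (x * y) = χ x * χ y) {i j : ℤ} (hi : (a : ℤ) ∣ i) (hj : (b : ℤ) ∣ j) :
    IsIntegral ℤ ((jSum χ i j + 1) / (1 - ζ) ^ (a + b)) := by
  have hn0 : n ≠ 0 := hn.pos.ne'
  have hχγ0 : χ γ ≠ 0 := hχγ ▸ hζ.ne_zero hn0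
  let f : F →*₀ ℂ :=
    { toFun := χ
      map_zero' := hχ0
      map_one' := (mul_eq_left₀ hχγ0).mp (by rw [← hχmul, mul_one])
      map_mul' := hχmul }
  have hfγ : f γ = ζ := hχγ
  have hcard : n ∣ Fintype.card F - 1 := hζ.dvd_of_pow_eq_one _ <| by
    rw [← hfγ, ← map_pow, FiniteField.pow_card_sub_one_eq_one γ ((map_ne_zero f).mp hχγ0), map_one]
  have hf (x : F) (hx : x ≠ 0) : f x ^ n = 1 := by
    obtain ⟨k, rfl⟩ := hγ x hx
    rw [map_pow, hfγ, ← pow_mul, mul_comm, pow_mul, hζ.pow_eq_one, one_pow]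
  obtain ⟨ψ, hψn, rfl : _ = χ⟩ := exists_mulChar_integralClosure hn0 f hf
  exact isIntegral_jSum_ringHomComp_add_one_div hn ha hb hab hcard hζ hψn hi hj

end ShiftedJacobiSum

theorem jacobiSum_lsq_div {F : Type*} [Field F] [Fintype F] [DecidableEq F]
    (l p r q : ℕ) (hl : l.Prime) (hl3 : 3 ≤ l) (hp : p.Prime) (hr : 0 < r)
    (hq : q = p ^ r) (hql : q % l ^ 2 = 1) (hcard : Fintype.card F = q)
    (γ : F) (hγ : ∀ x : F, x ≠ 0 → ∃ k : ℕ, γ ^ k = x)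
    (ζ : ℂ) (hζ : ζ = Complex.exp (2 * Real.pi * Complex.I / ((l ^ 2 : ℕ) : ℂ)))
    (χ : F → ℂ) (hχ0 : χ 0 = 0) (hχγ : χ γ = ζ)
    (hχmul : ∀ x y : F, χ (x * y) = χ x * χ y)
    (n : ℤ) (hn1 : 1 ≤ n) (hn2 : n ≤ (l : ℤ) ^ 2 - 1) (hln : (l : ℤ) ∣ n) :
    IsIntegral ℤ ((jSum χ 1 n + 1) / (1 - ζ) ^ (l + 1)) := by
  have hodd : Odd l := hl.odd_of_ne_two (by lia)
  have hζprim : IsPrimitiveRoot ζ (l ^ 2) := hζ ▸ isPrimitiveRoot_exp _ (pow_ne_zero 2 hl.ne_zero)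
  exact add_comm 1 l ▸ jacobiSum_lsq_div_general hodd.pow (one_dvd _) (dvd_pow_self l two_ne_zero)
    (by nlinarith) hγ hζprim hχ0 hχγ hχmul (by simp) hln
end
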